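/- arXiv:1805.04648 — 2 statements merged into one kernel-verified Lean document; each statement's English description precedes it below -/
import Mathlib

section
/- Assume b₀ − 2b₁ > 0 and b₀ + (m−2)b₁ > 0. Then M₀ is invertible, and x(a)ᵀ M₀⁻¹ x(a) = p for every treatment a ∈ A. (The standardized prediction variance of the uniform design measure is constant and equal to p, the G-optimality property.) -/
open Matrix Finset

namespace OofA

/-- The index set `S` of pairs `(i,j)` with `i < j`. -/
abbrev Pairs (m : ℕ) := {ij : Fin m × Fin m // ij.1 < ij.2}

/-- `z_{ij}(a)`: for a treatment `a` (a permutation, `a k` being the component placed at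
position `k`), this equals `c h` where `h` is the distance between the positions of the
components `i` and `j` in `a`, with sign `+` if `i` precedes `j` and `-` otherwise. -/
noncomputable def z {m : ℕ} (c : ℕ → ℝ) (a : Equiv.Perm (Fin m)) (ij : Pairs m) : ℝ :=
  if (a.symm ij.1.1 : ℕ) < (a.symm ij.1.2 : ℕ) then
    c (Nat.dist (a.symm ij.1.1 : ℕ) (a.symm ij.1.2 : ℕ))
  else
    -c (Nat.dist (a.symm ij.1.1 : ℕ) (a.symm ij.1.2 : ℕ))

/-- The vector `x(a) = (1, z(a)ᵀ)ᵀ ∈ ℝ^p`, indexed by `Unit ⊕ Pairs m`. -/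
noncomputable def x {m : ℕ} (c : ℕ → ℝ) (a : Equiv.Perm (Fin m)) : (Unit ⊕ Pairs m) → ℝ :=
  Sum.elim (fun _ => (1 : ℝ)) (z c a)

/-- The moment matrix `M(w) = Σ_a w(a) x(a) x(a)ᵀ` of a design measure `w`. -/
noncomputable def momentMatrix {m : ℕ} (c : ℕ → ℝ) (w : Equiv.Perm (Fin m) → ℝ) :
    Matrix (Unit ⊕ Pairs m) (Unit ⊕ Pairs m) ℝ :=
  ∑ a : Equiv.Perm (Fin m), w a • Matrix.vecMulVec (x c a) (x c a)

/-- The moment matrix `M₀` of the uniform design measure `w₀(a) = 1/m!`. -/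
noncomputable def M0 (m : ℕ) (c : ℕ → ℝ) : Matrix (Unit ⊕ Pairs m) (Unit ⊕ Pairs m) ℝ :=
  momentMatrix c (fun _ => 1 / (Nat.factorial m : ℝ))

/-- A signed permutation matrix: exactly one nonzero entry in each row and in each column,
each nonzero entry being `1` or `-1`. -/
def IsSignedPerm {n : Type*} [Fintype n] (R : Matrix n n ℝ) : Prop :=
  (∀ i, ∃! j, R i j ≠ 0) ∧ (∀ j, ∃! i, R i j ≠ 0) ∧
    (∀ i j, R i j ≠ 0 → R i j = 1 ∨ R i j = -1)

/-- `b₀ = (2/(m(m−1))) Σ_{h=1}^{m−1} (m−h) c_h²`. -/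
noncomputable def b0 (m : ℕ) (c : ℕ → ℝ) : ℝ :=
  (2 / ((m : ℝ) * ((m : ℝ) - 1))) *
    ∑ h ∈ Finset.Icc 1 (m - 1), ((m : ℝ) - (h : ℝ)) * (c h) ^ 2

/-- `b₁ = (2/(m(m−1)(m−2))) Σ (m−h₁−h₂) c_{h₁} (2c_{h₁+h₂} − c_{h₂})`,
summed over `h₁, h₂ ≥ 1` with `h₁ + h₂ ≤ m − 1`. -/
noncomputable def b1 (m : ℕ) (c : ℕ → ℝ) : ℝ :=
  (2 / ((m : ℝ) * ((m : ℝ) - 1) * ((m : ℝ) - 2))) *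
    ∑ h1 ∈ Finset.Icc 1 (m - 1), ∑ h2 ∈ Finset.Icc 1 (m - 1 - h1),
      ((m : ℝ) - (h1 : ℝ) - (h2 : ℝ)) * c h1 * (2 * c (h1 + h2) - c h2)

/-- The `q × q` matrix `V` of (7). -/
noncomputable def V (m : ℕ) : Matrix (Pairs m) (Pairs m) ℝ := fun ij kl =>
  if (ij.1.1 = kl.1.1 ∧ ij.1.2 ≠ kl.1.2) ∨ (ij.1.1 ≠ kl.1.1 ∧ ij.1.2 = kl.1.2) then 1
  else if ij.1.1 = kl.1.2 ∨ ij.1.2 = kl.1.1 then -1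
  else 0

/-!
The uniform measure is invariant under relabelling the components, so its first moments vanish and
`M₀` is block diagonal with lower block `b₀ + b₁ V`, where `b₀` and `b₁` are the averages of
`f k l ^ 2` and `f k l * f k n` over distinct positions, `f` being the value of `z` as a skew
function of the positions. Moreover `V + 2 = B Bᵀ` for the oriented incidence matrix `B` of the
complete graph, and `Bᵀ B = m - J` with `B J = 0`, so `(B Bᵀ)² = m B Bᵀ`. Hence the lower block has
the eigenvalues `b₀ - 2 b₁` and `b₀ + (m - 2) b₁`, and its inverse is a combination of `1` and
`B Bᵀ`. The prediction variance therefore depends on `a` only through `‖z(a)‖²` and `‖Bᵀ z(a)‖²`.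
These are a sum over all unordered pairs of positions and a sum over all positions, so `a` merely
permutes their terms.
-/

section Averaging

variable {M : Type*}

theorem card_nsmul_sum_smul {G X : Type*} [Group G] [Fintype G] [Fintype X] [MulAction G X]
    [MulAction.IsPretransitive G X] [AddCommMonoid M] (f : X → M) (x : X) :
    Fintype.card X • ∑ g : G, f (g • x) = Fintype.card G • ∑ y, f y := by
  have orbit_sum_const (y : X) : ∑ g : G, f (g • y) = ∑ g : G, f (g • x) := by
    obtain ⟨h, rfl⟩ := MulAction.exists_smul_eq G x y
    simpa only [Equiv.coe_mulRight, mul_smul] using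
      Equiv.sum_comp (Equiv.mulRight h) fun g : G => f (g • x)
  have translate_sum (g : G) : ∑ y, f (g • y) = ∑ y, f y :=
    Equiv.sum_comp (MulAction.toPerm g) f
  calc Fintype.card X • ∑ g : G, f (g • x)
      = ∑ y : X, ∑ g : G, f (g • y) := by simp [orbit_sum_const]
    _ = ∑ g : G, ∑ y : X, f (g • y) := sum_comm
    _ = Fintype.card G • ∑ y, f y := by simp [translate_sum]

theorem descFactorial_nsmul_sum_perm {α : Type*} [Fintype α] [DecidableEq α] [AddCommMonoid M]
    {n : ℕ} (f : (Fin n → α) → M) (e : Fin n ↪ α) :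
    (Fintype.card α).descFactorial n • ∑ σ : Equiv.Perm α, f (σ ∘ e) =
      (Fintype.card α).factorial • ∑ v : Fin n → α with v.Injective, f v := by
  have : MulAction.IsPretransitive (Equiv.Perm α) (Fin n ↪ α) :=
    Equiv.Perm.isMultiplyPretransitive α n
  have sum_embedding : ∑ d : Fin n ↪ α, f d = ∑ v : Fin n → α with v.Injective, f v := by
    rw [sum_subtype _ (p := Function.Injective) (by simp) f]
    exact (Fintype.sum_equiv (Equiv.subtypeInjectiveEquivEmbedding _ _) _ _ fun _ => rfl).symm
  have average := card_nsmul_sum_smul (G := Equiv.Perm α) (fun d : Fin n ↪ α => f d) e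
  rwa [Fintype.card_embedding_eq, Fintype.card_fin, Fintype.card_perm, sum_embedding] at average

theorem sum_fin_succ_fun {α : Type*} [Fintype α] [AddCommMonoid M] {n : ℕ}
    (f : (Fin (n + 1) → α) → M) :
    ∑ v, f v = ∑ i, ∑ w : Fin n → α, f (vecCons i w) := by
  rw [← (Fin.consEquiv fun _ => α).sum_comp, Fintype.sum_prod_type]
  rfl

theorem sum_eq_zero_of_mul_right_eq_neg {G : Type*} [Group G] [Fintype G] [AddCommGroup M]
    [IsAddTorsionFree M] {f : G → M} (g : G) (hf : ∀ h, f (h * g) = -f h) : ∑ h, f h = 0 := by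
  have h := Equiv.sum_comp (Equiv.mulRight g) f
  simp only [Equiv.coe_mulRight, hf, sum_neg_distrib] at h
  exact neg_eq_self.mp h

end Averaging

section GapSums

variable {R : Type*} [CommRing R]

theorem sum_range_sum_Icc (g : ℕ → R) (m : ℕ) :
    ∑ k ∈ range m, ∑ h ∈ Icc 1 k, g h = ∑ h ∈ Icc 1 (m - 1), ((m : R) - h) * g h := by
  calc ∑ k ∈ range m, ∑ h ∈ Icc 1 k, g h
      = ∑ h ∈ Icc 1 (m - 1), ∑ _k ∈ Ico h m, g h :=
        sum_comm' fun k h => by simp only [mem_range, mem_Icc, mem_Ico]; omega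
    _ = ∑ h ∈ Icc 1 (m - 1), ((m : R) - h) * g h := sum_congr rfl fun h hh => by
        have : h ≤ m := by simp only [mem_Icc] at hh; omega
        rw [sum_const, Nat.card_Ico, nsmul_eq_mul, Nat.cast_sub this]

theorem sum_range_sum_Icc_sum_Icc (g : ℕ → ℕ → R) (m : ℕ) :
    ∑ k ∈ range m, ∑ h₁ ∈ Icc 1 k, ∑ h₂ ∈ Icc 1 (m - 1 - k), g h₁ h₂ =
      ∑ h₁ ∈ Icc 1 (m - 1), ∑ h₂ ∈ Icc 1 (m - 1 - h₁), ((m : R) - h₁ - h₂) * g h₁ h₂ := by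
  calc ∑ k ∈ range m, ∑ h₁ ∈ Icc 1 k, ∑ h₂ ∈ Icc 1 (m - 1 - k), g h₁ h₂
      = ∑ h₁ ∈ Icc 1 (m - 1), ∑ k ∈ Ico h₁ m, ∑ h₂ ∈ Icc 1 (m - 1 - k), g h₁ h₂ :=
        sum_comm' fun k h₁ => by simp only [mem_range, mem_Icc, mem_Ico]; omega
    _ = ∑ h₁ ∈ Icc 1 (m - 1), ∑ h₂ ∈ Icc 1 (m - 1 - h₁), ∑ _k ∈ Ico h₁ (m - h₂), g h₁ h₂ :=
        sum_congr rfl fun h₁ _ =>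
          sum_comm' fun k h₂ => by simp only [mem_Icc, mem_Ico]; omega
    _ = _ := sum_congr rfl fun h₁ _ => sum_congr rfl fun h₂ hh => by
        have : h₁ ≤ m - h₂ ∧ h₂ ≤ m := by simp only [mem_Icc] at hh; omega
        rw [sum_const, Nat.card_Ico, nsmul_eq_mul, Nat.cast_sub this.1, Nat.cast_sub this.2]
        ring

theorem sum_Icc_sum_Icc_sub_one (g : ℕ → ℕ → R) (n : ℕ) :
    ∑ s ∈ Icc 1 n, ∑ h ∈ Icc 1 (s - 1), g h s =
      ∑ h₁ ∈ Icc 1 n, ∑ h₂ ∈ Icc 1 (n - h₁), g h₁ (h₁ + h₂) := by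
  rw [sum_comm' (t' := Icc 1 n) (s' := fun h => Icc (h + 1) n) fun s h => by
    simp only [mem_Icc]; omega]
  refine sum_congr rfl fun h₁ hh => sum_nbij' (· - h₁) (h₁ + ·) ?_ ?_ ?_ ?_ ?_ <;>
    intro s hs <;> simp only [mem_Icc] at * <;> first | omega | rw [Nat.add_sub_cancel' (by omega)]

theorem sq_sum_Icc (g : ℕ → R) (n : ℕ) :
    (∑ h ∈ Icc 1 n, g h) ^ 2 =
      ∑ s ∈ Icc 1 n, (g s ^ 2 + 2 * ∑ h ∈ Icc 1 (s - 1), g h * g s) := by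
  induction n with
  | zero => simp
  | succ n ih =>
    rw [sum_Icc_succ_top (by omega), sum_Icc_succ_top (by omega), ← ih, Nat.add_sub_cancel,
      ← sum_mul]
    ring

theorem sum_range_sq_sum_Icc (g : ℕ → R) (m : ℕ) :
    ∑ k ∈ range m, (∑ h ∈ Icc 1 k, g h) ^ 2 =
      ∑ h ∈ Icc 1 (m - 1), ((m : R) - h) * g h ^ 2 +
        2 * ∑ h₁ ∈ Icc 1 (m - 1), ∑ h₂ ∈ Icc 1 (m - 1 - h₁),
          ((m : R) - h₁ - h₂) * (g h₁ * g (h₁ + h₂)) := by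
  calc ∑ k ∈ range m, (∑ h ∈ Icc 1 k, g h) ^ 2
      = ∑ s ∈ Icc 1 (m - 1),
          ((m : R) - s) * (g s ^ 2 + 2 * ∑ h ∈ Icc 1 (s - 1), g h * g s) := by
        simp only [sq_sum_Icc, sum_range_sum_Icc]
    _ = ∑ s ∈ Icc 1 (m - 1), ((m : R) - s) * g s ^ 2 +
          2 * ∑ s ∈ Icc 1 (m - 1), ∑ h ∈ Icc 1 (s - 1), ((m : R) - s) * (g h * g s) := by
        simp only [mul_add, sum_add_distrib, mul_sum, mul_left_comm _ (2 : R)]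
    _ = _ := by
        rw [sum_Icc_sum_Icc_sub_one fun h s => ((m : R) - s) * (g h * g s)]
        simp only [Nat.cast_add, sub_sub]

end GapSums

section PositionKernel

variable {m : ℕ}

/-- The strictly upper triangular Toeplitz array of `g`; it records how strongly a component at
position `k` acts on one at a later position `l`. -/
def precedence (g : ℕ → ℝ) (k l : Fin m) : ℝ :=
  if k < l then g (l - k) else 0

/-- The value `z_{ij}(a)` as a function of the positions `k` and `l` of `i` and `j`, made skew
by letting it vanish on the diagonal. -/
def kernel (c : ℕ → ℝ) (k l : Fin m) : ℝ :=
  precedence c k l - precedence c l k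

theorem kernel_swap (c : ℕ → ℝ) (k l : Fin m) : kernel c l k = -kernel c k l :=
  (neg_sub _ _).symm

theorem kernel_self (c : ℕ → ℝ) (k : Fin m) : kernel c k k = 0 :=
  sub_self _

theorem kernel_sq (c : ℕ → ℝ) (k l : Fin m) :
    kernel c k l ^ 2 = precedence (fun h => c h ^ 2) k l + precedence (fun h => c h ^ 2) l k := by
  rcases lt_trichotomy k l with h | rfl | h <;> simp [kernel, precedence, *, not_lt_of_gt]

theorem z_eq_kernel (c : ℕ → ℝ) (a : Equiv.Perm (Fin m)) (ij : Pairs m) :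
    z c a ij = kernel c (a.symm ij.1.1) (a.symm ij.1.2) := by
  rcases lt_or_gt_of_ne (a.symm.injective.ne ij.2.ne) with h | h
  · simp [z, kernel, precedence, h, h.not_gt, Nat.dist_eq_sub_of_le (Fin.le_def.mp h.le)]
  · simp [z, kernel, precedence, h, h.not_gt, Nat.dist_eq_sub_of_le_right (Fin.le_def.mp h.le)]

theorem sum_precedence_right (g : ℕ → ℝ) (k : Fin m) :
    ∑ l : Fin m, precedence g k l = ∑ h ∈ Icc 1 (m - 1 - k), g h := by
  simp only [precedence, Fin.lt_def]
  rw [Fin.sum_univ_eq_sum_range fun l => if (k : ℕ) < l then g (l - k) else 0, ← sum_filter]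
  refine sum_nbij' (· - (k : ℕ)) (· + (k : ℕ)) ?_ ?_ ?_ ?_ ?_ <;> intro l hl <;>
    simp only [mem_filter, mem_range, mem_Icc] at * <;> omega

theorem sum_precedence_left (g : ℕ → ℝ) (k : Fin m) :
    ∑ l : Fin m, precedence g l k = ∑ h ∈ Icc 1 (k : ℕ), g h := by
  simp only [precedence, Fin.lt_def]
  rw [Fin.sum_univ_eq_sum_range fun l => if l < (k : ℕ) then g (k - l) else 0, ← sum_filter]
  refine sum_nbij' ((k : ℕ) - ·) ((k : ℕ) - ·) ?_ ?_ ?_ ?_ ?_ <;> intro l hl <;>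
    simp only [mem_filter, mem_range, mem_Icc] at * <;> omega

theorem sum_kernel (c : ℕ → ℝ) (k : Fin m) :
    ∑ l, kernel c k l = ∑ h ∈ Icc 1 (m - 1 - k), c h - ∑ h ∈ Icc 1 (k : ℕ), c h := by
  simp only [kernel, sum_sub_distrib, sum_precedence_right, sum_precedence_left]

theorem sum_sum_kernel_sq (hm : 2 ≤ m) (c : ℕ → ℝ) :
    ∑ k : Fin m, ∑ l, kernel c k l ^ 2 = m * (m - 1) * b0 m c := by
  have hm' : (2 : ℝ) ≤ m := by exact_mod_cast hm
  have h0 : (m : ℝ) ≠ 0 := by linarith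
  have h1 : (m : ℝ) - 1 ≠ 0 := by linarith
  let P (k : ℕ) : ℝ := ∑ h ∈ Icc 1 k, c h ^ 2
  calc ∑ k : Fin m, ∑ l, kernel c k l ^ 2
      = ∑ k : Fin m, (P (m - 1 - k) + P k) := by
        simp only [kernel_sq, sum_add_distrib, sum_precedence_right, sum_precedence_left, P]
    _ = 2 * ∑ k ∈ range m, P k := by
        rw [Fin.sum_univ_eq_sum_range fun k => P (m - 1 - k) + P k, sum_add_distrib,
          sum_range_reflect P, two_mul]
    _ = m * (m - 1) * b0 m c := by
        rw [sum_range_sum_Icc, b0]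
        field_simp

theorem sum_sq_sum_kernel (hm : 3 ≤ m) (c : ℕ → ℝ) :
    ∑ k : Fin m, (∑ l, kernel c k l) ^ 2 = m * (m - 1) * (b0 m c + (m - 2) * b1 m c) := by
  have hm' : (3 : ℝ) ≤ m := by exact_mod_cast hm
  have h0 : (m : ℝ) ≠ 0 := by linarith
  have h1 : (m : ℝ) - 1 ≠ 0 := by linarith
  have h2 : (m : ℝ) - 2 ≠ 0 := by linarith
  let P (k : ℕ) : ℝ := ∑ h ∈ Icc 1 k, c h
  have expand : ∑ k : Fin m, (∑ l, kernel c k l) ^ 2 =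
      2 * ∑ k ∈ range m, P k ^ 2 - 2 * ∑ k ∈ range m, P k * P (m - 1 - k) := by
    calc ∑ k : Fin m, (∑ l, kernel c k l) ^ 2
        = ∑ k : Fin m, (P (m - 1 - k) ^ 2 + P k ^ 2 - 2 * (P k * P (m - 1 - k))) :=
          sum_congr rfl fun k _ => by rw [sum_kernel]; ring
      _ = _ := by
          rw [Fin.sum_univ_eq_sum_range
              fun k => P (m - 1 - k) ^ 2 + P k ^ 2 - 2 * (P k * P (m - 1 - k)),
            sum_sub_distrib, sum_add_distrib, sum_range_reflect fun k => P k ^ 2, ← mul_sum,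
            two_mul (∑ k ∈ range m, P k ^ 2)]
  have products : ∑ k ∈ range m, P k * P (m - 1 - k) =
      ∑ h₁ ∈ Icc 1 (m - 1), ∑ h₂ ∈ Icc 1 (m - 1 - h₁),
        ((m : ℝ) - h₁ - h₂) * (c h₁ * c h₂) := by
    simp only [P, sum_mul_sum]
    exact sum_range_sum_Icc_sum_Icc (fun h₁ h₂ => c h₁ * c h₂) m
  have weights (h₁ h₂ : ℕ) : ((m : ℝ) - h₁ - h₂) * c h₁ * (2 * c (h₁ + h₂) - c h₂) =
      2 * (((m : ℝ) - h₁ - h₂) * (c h₁ * c (h₁ + h₂))) -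
        ((m : ℝ) - h₁ - h₂) * (c h₁ * c h₂) := by ring
  rw [expand, sum_range_sq_sum_Icc, products, b0, b1]
  simp only [weights, sum_sub_distrib, ← mul_sum]
  field_simp
  ring

end PositionKernel

section InjectiveTuples

theorem injective_triple_iff_ne {α : Type*} {i j k : α} :
    Function.Injective ![i, j, k] ↔ i ≠ j ∧ i ≠ k ∧ j ≠ k := by
  rw [vecCons, Fin.cons_injective_iff, injective_pair_iff_ne]
  simp [and_assoc, and_comm]

variable {α : Type*} [Fintype α] [DecidableEq α]

theorem sum_injective_pair {M : Type*} [AddCommMonoid M] {F : α → α → M}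
    (hF : ∀ k, F k k = 0) :
    ∑ v : Fin 2 → α with v.Injective, F (v 0) (v 1) = ∑ k, ∑ l, F k l := by
  have unrestrict (k l : α) : (if k ≠ l then F k l else 0) = F k l := by
    grind
  calc ∑ v : Fin 2 → α with v.Injective, F (v 0) (v 1)
      = ∑ k, ∑ l, if k ≠ l then F k l else 0 := by
        simp only [sum_filter, sum_fin_succ_fun, Fintype.sum_unique, ← injective_pair_iff_ne]
        rfl
    _ = _ := by simp only [unrestrict]

theorem sum_injective_triple_mul {R : Type*} [CommRing R] {F : α → α → R} (hF : ∀ k, F k k = 0) :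
    ∑ v : Fin 3 → α with v.Injective, F (v 0) (v 1) * F (v 0) (v 2) =
      ∑ k, (∑ l, F k l) ^ 2 - ∑ k, ∑ l, F k l ^ 2 := by
  have unrestrict (k l n : α) : (if k ≠ l ∧ k ≠ n ∧ l ≠ n then F k l * F k n else 0) =
      F k l * F k n - if l = n then F k l * F k n else 0 := by
    grind
  calc ∑ v : Fin 3 → α with v.Injective, F (v 0) (v 1) * F (v 0) (v 2)
      = ∑ k, ∑ l, ∑ n, if k ≠ l ∧ k ≠ n ∧ l ≠ n then F k l * F k n else 0 := by
        simp only [sum_filter, sum_fin_succ_fun, Fintype.sum_unique, ← injective_triple_iff_ne]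
        rfl
    _ = _ := by
        simp only [unrestrict, sum_sub_distrib, sum_ite_eq, mem_univ, if_true, sq, sum_mul_sum]

end InjectiveTuples

section Moments

variable {m : ℕ} {i j k l : Fin m}

theorem sum_perm_kernel (c : ℕ → ℝ) (i j : Fin m) :
    ∑ σ : Equiv.Perm (Fin m), kernel c (σ i) (σ j) = 0 :=
  sum_eq_zero_of_mul_right_eq_neg (Equiv.swap i j) fun σ => by
    simp [kernel_swap c (σ i)]

theorem sum_perm_kernel_mul_of_disjoint (c : ℕ → ℝ) (hki : k ≠ i) (hkj : k ≠ j) (hli : l ≠ i)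
    (hlj : l ≠ j) :
    ∑ σ : Equiv.Perm (Fin m), kernel c (σ i) (σ j) * kernel c (σ k) (σ l) = 0 :=
  sum_eq_zero_of_mul_right_eq_neg (Equiv.swap i j) fun σ => by
    simp [kernel_swap c (σ i), Equiv.swap_apply_of_ne_of_ne, *]

theorem sum_perm_kernel_sq (hij : i ≠ j) (c : ℕ → ℝ) :
    ∑ σ : Equiv.Perm (Fin m), kernel c (σ i) (σ j) ^ 2 = m.factorial * b0 m c := by
  have hm : 2 ≤ m := by omega
  have hm' : (2 : ℝ) ≤ m := by exact_mod_cast hm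
  have pairs : ∑ v : Fin 2 → Fin m with v.Injective, kernel c (v 0) (v 1) ^ 2 =
      ∑ k : Fin m, ∑ l, kernel c k l ^ 2 :=
    sum_injective_pair (F := fun k l => kernel c k l ^ 2) fun k => by simp [kernel_self]
  have average := descFactorial_nsmul_sum_perm
    (fun v : Fin 2 → Fin m => kernel c (v 0) (v 1) ^ 2) ⟨![i, j], injective_pair_iff_ne.mpr hij⟩
  rw [pairs, sum_sum_kernel_sq hm, Fintype.card_fin, nsmul_eq_mul, nsmul_eq_mul,
    Nat.cast_descFactorial_two] at average
  have choices_ne_zero : (m : ℝ) * (m - 1) ≠ 0 := mul_ne_zero (by linarith) (by linarith)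
  exact mul_left_cancel₀ choices_ne_zero (average.trans (by ring))

theorem sum_perm_kernel_mul_kernel (hm : 3 ≤ m) (c : ℕ → ℝ) (hij : i ≠ j) (hik : i ≠ k)
    (hjk : j ≠ k) :
    ∑ σ : Equiv.Perm (Fin m), kernel c (σ i) (σ j) * kernel c (σ i) (σ k) =
      m.factorial * b1 m c := by
  have hm' : (3 : ℝ) ≤ m := by exact_mod_cast hm
  have choices_ne_zero : (m : ℝ) * (m - 1) * (m - 2) ≠ 0 :=
    mul_ne_zero (mul_ne_zero (by linarith) (by linarith)) (by linarith)
  have triples : ∑ v : Fin 3 → Fin m with v.Injective,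
      kernel c (v 0) (v 1) * kernel c (v 0) (v 2) = m * (m - 1) * (m - 2) * b1 m c := by
    rw [sum_injective_triple_mul (kernel_self c), sum_sq_sum_kernel hm,
      sum_sum_kernel_sq (by omega)]
    ring
  have average := descFactorial_nsmul_sum_perm
    (fun v : Fin 3 → Fin m => kernel c (v 0) (v 1) * kernel c (v 0) (v 2))
    ⟨![i, j, k], injective_triple_iff_ne.mpr ⟨hij, hik, hjk⟩⟩
  have choices : (m.descFactorial 3 : ℝ) = m * (m - 1) * (m - 2) := by
    rw [Nat.descFactorial_succ, Nat.cast_mul, Nat.cast_descFactorial_two,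
      Nat.cast_sub (by omega), Nat.cast_ofNat]
    ring
  rw [triples, Fintype.card_fin, nsmul_eq_mul, nsmul_eq_mul, choices] at average
  exact mul_left_cancel₀ choices_ne_zero (average.trans (by ring))

theorem sum_z_mul_z (hm : 3 ≤ m) (c : ℕ → ℝ) (ij kl : Pairs m) :
    ∑ a : Equiv.Perm (Fin m), z c a ij * z c a kl =
      m.factorial * (b0 m c • (1 : Matrix (Pairs m) (Pairs m) ℝ) + b1 m c • V m) ij kl := by
  have reindex : ∑ a : Equiv.Perm (Fin m), z c a ij * z c a kl =
      ∑ σ : Equiv.Perm (Fin m),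
        kernel c (σ ij.1.1) (σ ij.1.2) * kernel c (σ kl.1.1) (σ kl.1.2) := by
    simp only [z_eq_kernel]
    exact Equiv.sum_comp (Equiv.inv (Equiv.Perm (Fin m)))
      fun σ => kernel c (σ ij.1.1) (σ ij.1.2) * kernel c (σ kl.1.1) (σ kl.1.2)
  rw [reindex]
  obtain ⟨⟨i, j⟩, hij : i < j⟩ := ij
  obtain ⟨⟨k, l⟩, hkl : k < l⟩ := kl
  simp only [Matrix.add_apply, Matrix.smul_apply, Matrix.one_apply, V, Subtype.mk.injEq,
    Prod.mk.injEq, smul_eq_mul]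
  have flip (p q : Fin m) (σ : Equiv.Perm (Fin m)) :
      kernel c (σ p) (σ q) = -kernel c (σ q) (σ p) := kernel_swap c _ _
  rcases eq_or_ne i k with rfl | hik <;> rcases eq_or_ne j l with rfl | hjl
  · simpa [hij.ne', hij.ne, ← sq] using sum_perm_kernel_sq hij.ne c
  · simpa [hjl] using sum_perm_kernel_mul_kernel hm c hij.ne hkl.ne hjl
  · simpa [hik, flip _ j] using sum_perm_kernel_mul_kernel hm c hij.ne' hkl.ne' hik
  rcases eq_or_ne i l with rfl | hil
  · simpa [hik, hjl, flip k i] using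
      sum_perm_kernel_mul_kernel hm c hij.ne hik (hkl.trans hij).ne'
  rcases eq_or_ne j k with rfl | hjk
  · simpa [hik, hjl, flip i j] using
      sum_perm_kernel_mul_kernel hm c hij.ne' hkl.ne hil
  · simpa [hik, hjl, hil, hjk] using
      sum_perm_kernel_mul_of_disjoint c hik.symm hjk.symm hil.symm hjl.symm

end Moments

section Incidence

variable {m : ℕ}

theorem two_mul_sum_pairs {R : Type*} [Semiring R] (H : Fin m → Fin m → R)
    (hsymm : ∀ i j, H i j = H j i) (hdiag : ∀ i, H i i = 0) :
    2 * ∑ ij : Pairs m, H ij.1.1 ij.1.2 = ∑ i, ∑ j, H i j := by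
  have upper : ∑ i, ∑ j, (if i < j then H i j else 0) = ∑ ij : Pairs m, H ij.1.1 ij.1.2 := by
    rw [← Fintype.sum_prod_type' (f := fun i j => if i < j then H i j else 0), ← sum_filter]
    exact sum_subtype _ (by simp) fun ij : Fin m × Fin m => H ij.1 ij.2
  have split (i j : Fin m) :
      H i j = (if i < j then H i j else 0) + (if j < i then H j i else 0) := by
    rcases lt_trichotomy i j with h | rfl | h
    · simp [h, h.not_gt]
    · simp [hdiag]
    · simp [h, h.not_gt, hsymm i j]
  calc 2 * ∑ ij : Pairs m, H ij.1.1 ij.1.2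
      = ∑ i, ∑ j, (if i < j then H i j else 0) + ∑ i, ∑ j, (if j < i then H j i else 0) := by
        rw [sum_comm (f := fun i j => if j < i then H j i else 0), upper, two_mul]
    _ = ∑ i, ∑ j, H i j := by simp only [← sum_add_distrib, ← split]

/-- The oriented incidence matrix of the complete graph on the components: the row of `(i, j)` is
`e_i - e_j`. It diagonalises `V`, because `V + 2` is its Gram matrix. -/
def incidence (m : ℕ) : Matrix (Pairs m) (Fin m) ℝ :=
  of fun ij k => (if k = ij.1.1 then 1 else 0) - (if k = ij.1.2 then 1 else 0)

theorem vecMul_incidence {D : Fin m → Fin m → ℝ} (hD : ∀ i j, D j i = -D i j) (k : Fin m) :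
    ((fun ij : Pairs m => D ij.1.1 ij.1.2) ᵥ* incidence m) k = ∑ l, D k l := by
  let H (i j : Fin m) : ℝ := D i j * ((if k = i then 1 else 0) - (if k = j then 1 else 0))
  have double_sum : ∑ i, ∑ j, H i j = 2 * ∑ l, D k l := by
    simp [H, mul_sub, sum_sub_distrib, sum_add_distrib, hD k, two_mul]
  have hsymm (i j : Fin m) : H i j = H j i := by
    simp only [H]
    rw [hD j i]
    ring
  exact mul_left_cancel₀ two_ne_zero
    ((two_mul_sum_pairs H hsymm fun i => by simp [H]).trans double_sum)

theorem incidence_mul_transpose (m : ℕ) :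
    incidence m * (incidence m)ᵀ = V m + (2 : ℝ) • 1 := by
  ext ⟨⟨i, j⟩, hij⟩ ⟨⟨k, l⟩, hkl⟩
  have gram : (incidence m * (incidence m)ᵀ) ⟨⟨i, j⟩, hij⟩ ⟨⟨k, l⟩, hkl⟩ =
      (if i = k then 1 else 0) - (if i = l then 1 else 0) -
        ((if j = k then 1 else 0) - (if j = l then 1 else 0)) := by
    simp [Matrix.mul_apply, incidence, sub_mul, sum_sub_distrib]
  rw [gram]
  simp only [V, Matrix.add_apply, Matrix.smul_apply, Matrix.one_apply, Subtype.mk.injEq,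
    Prod.mk.injEq, smul_eq_mul]
  grind

theorem transpose_mul_incidence (m : ℕ) :
    (incidence m)ᵀ * incidence m = (m : ℝ) • 1 - of fun _ _ => 1 := by
  ext k l
  have h := vecMul_incidence (D := fun i j => (if k = i then 1 else 0) - (if k = j then 1 else 0))
    (fun i j => (neg_sub _ _).symm) l
  simpa [vecMul, dotProduct, Matrix.mul_apply, incidence, Matrix.one_apply] using h

theorem incidence_mul_ones (m : ℕ) :
    incidence m * (of fun _ _ => 1 : Matrix (Fin m) (Fin m) ℝ) = 0 := by
  ext ij k
  simp [Matrix.mul_apply, incidence, sum_sub_distrib]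

theorem incidence_gram_mul_self (m : ℕ) :
    incidence m * (incidence m)ᵀ * (incidence m * (incidence m)ᵀ) =
      (m : ℝ) • (incidence m * (incidence m)ᵀ) := by
  calc incidence m * (incidence m)ᵀ * (incidence m * (incidence m)ᵀ)
      = incidence m * ((incidence m)ᵀ * incidence m) * (incidence m)ᵀ := by
        simp only [Matrix.mul_assoc]
    _ = _ := by
        rw [transpose_mul_incidence, Matrix.mul_sub, incidence_mul_ones, sub_zero,
          Matrix.mul_smul, Matrix.mul_one, Matrix.smul_mul]

end Incidence

section InformationMatrix

theorem mul_eq_one_of_mul_self_eq_smul {K A : Type*} [Field K] [Ring A] [Algebra K A] {W : A}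
    {s t r : K} (hW : W * W = r • W) (hs : s ≠ 0) (hst : s + r * t ≠ 0) :
    (s • 1 + t • W) * ((s * (s + r * t))⁻¹ • ((s + r * t) • 1 - t • W)) = 1 := by
  have product : (s • 1 + t • W) * ((s + r * t) • 1 - t • W) = (s * (s + r * t)) • (1 : A) := by
    simp only [add_mul, mul_sub, smul_mul_smul_comm, hW, one_mul, mul_one]
    module
  rw [mul_smul_comm, product, inv_smul_smul₀ (mul_ne_zero hs hst)]

variable {m : ℕ}

theorem M0_eq_fromBlocks (hm : 3 ≤ m) (c : ℕ → ℝ) :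
    M0 m c = fromBlocks 1 0 0 (b0 m c • 1 + b1 m c • V m) := by
  have hfact : (m.factorial : ℝ) ≠ 0 := by positivity
  have entry (s t : Unit ⊕ Pairs m) :
      M0 m c s t = (m.factorial : ℝ)⁻¹ * ∑ a : Equiv.Perm (Fin m), x c a s * x c a t := by
    simp [M0, momentMatrix, Matrix.sum_apply, vecMulVec_apply, mul_sum]
  have mean (ij : Pairs m) : ∑ a : Equiv.Perm (Fin m), z c a ij = 0 := by
    simp only [z_eq_kernel]
    exact (Equiv.sum_comp (Equiv.inv (Equiv.Perm (Fin m)))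
      fun σ => kernel c (σ ij.1.1) (σ ij.1.2)).trans (sum_perm_kernel c _ _)
  ext s t
  rw [entry]
  rcases s with _ | ij <;> rcases t with _ | kl
  · simp [x, Fintype.card_perm, hfact]
  · simp [x, mean]
  · simp [x, mean]
  · simp only [x, Sum.elim_inr, sum_z_mul_z hm, inv_mul_cancel_left₀ hfact, fromBlocks_apply₂₂]

theorem M0_mul_eq_one (hm : 3 ≤ m) {c : ℕ → ℝ} (h₀ : b0 m c - 2 * b1 m c ≠ 0)
    (h₁ : b0 m c + ((m : ℝ) - 2) * b1 m c ≠ 0) :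
    M0 m c * fromBlocks 1 0 0 (((b0 m c - 2 * b1 m c) * (b0 m c + (m - 2) * b1 m c))⁻¹ •
      ((b0 m c + (m - 2) * b1 m c) • 1 - b1 m c • (incidence m * (incidence m)ᵀ))) = 1 := by
  have second_moments : b0 m c • 1 + b1 m c • V m =
      (b0 m c - 2 * b1 m c) • 1 + b1 m c • (incidence m * (incidence m)ᵀ) := by
    rw [incidence_mul_transpose]
    module
  have eigenvalue : b0 m c + (m - 2) * b1 m c = b0 m c - 2 * b1 m c + m * b1 m c := by ring
  rw [eigenvalue] at h₁ ⊢
  rw [M0_eq_fromBlocks hm, second_moments, fromBlocks_multiply]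
  simp only [mul_eq_one_of_mul_self_eq_smul (incidence_gram_mul_self m) h₀ h₁, Matrix.mul_zero,
    Matrix.zero_mul, Matrix.mul_one, add_zero, zero_add, fromBlocks_one]

theorem z_dotProduct_self (hm : 2 ≤ m) (c : ℕ → ℝ) (a : Equiv.Perm (Fin m)) :
    z c a ⬝ᵥ z c a = m * (m - 1) / 2 * b0 m c := by
  have relabel : ∑ i, ∑ j, kernel c (a.symm i) (a.symm j) ^ 2 =
      ∑ k : Fin m, ∑ l, kernel c k l ^ 2 :=
    Fintype.sum_equiv a.symm _ _ fun i => Equiv.sum_comp a.symm fun l => kernel c (a.symm i) l ^ 2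
  have h := two_mul_sum_pairs (fun i j => kernel c (a.symm i) (a.symm j) ^ 2)
    (fun i j => by rw [kernel_swap, neg_sq]) fun i => by simp [kernel_self]
  rw [relabel, sum_sum_kernel_sq hm] at h
  simp only [dotProduct, z_eq_kernel, ← sq]
  linarith

theorem z_dotProduct_gram_mulVec (hm : 3 ≤ m) (c : ℕ → ℝ) (a : Equiv.Perm (Fin m)) :
    z c a ⬝ᵥ ((incidence m * (incidence m)ᵀ) *ᵥ z c a) =
      m * (m - 1) * (b0 m c + (m - 2) * b1 m c) := by
  have row_sum (k : Fin m) : (z c a ᵥ* incidence m) k = ∑ l, kernel c (a.symm k) l := by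
    rw [← Equiv.sum_comp a.symm,
      ← vecMul_incidence (D := fun i j => kernel c (a.symm i) (a.symm j))
        (fun i j => kernel_swap c _ _)]
    simp only [← z_eq_kernel]
  calc z c a ⬝ᵥ ((incidence m * (incidence m)ᵀ) *ᵥ z c a)
      = ∑ k, (z c a ᵥ* incidence m) k ^ 2 := by
        rw [← mulVec_mulVec, mulVec_transpose, dotProduct_mulVec, dotProduct]
        simp only [sq]
    _ = ∑ k : Fin m, (∑ l, kernel c k l) ^ 2 := by
        simp only [row_sum]
        exact Equiv.sum_comp a.symm fun k => (∑ l, kernel c k l) ^ 2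
    _ = _ := sum_sq_sum_kernel hm c

end InformationMatrix

theorem statement13_general {m : ℕ} (hm : 3 ≤ m) (c : ℕ → ℝ) (h₀ : b0 m c - 2 * b1 m c ≠ 0)
    (h₁ : b0 m c + ((m : ℝ) - 2) * b1 m c ≠ 0) :
    IsUnit (M0 m c) ∧ ∀ a : Equiv.Perm (Fin m),
      x c a ⬝ᵥ ((M0 m c)⁻¹ *ᵥ x c a) = ((m * (m - 1) / 2 + 1 : ℕ) : ℝ) := by
  have inverse := M0_mul_eq_one hm h₀ h₁
  refine ⟨(isUnit_iff_isUnit_det _).mpr (isUnit_det_of_right_inverse inverse), fun a => ?_⟩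
  have pairs_card : ((m * (m - 1) / 2 + 1 : ℕ) : ℝ) = 1 + m * (m - 1) / 2 := by
    rw [← Nat.choose_two_right, Nat.cast_add_one, Nat.cast_choose_two, add_comm]
  rw [inv_eq_right_inv inverse, pairs_card, x, fromBlocks_mulVec, sumElim_dotProduct_sumElim]
  simp only [Sum.elim_comp_inl, Sum.elim_comp_inr, one_mulVec, zero_mulVec, add_zero, zero_add,
    smul_mulVec, sub_mulVec, dotProduct_smul, dotProduct_sub, smul_eq_mul,
    z_dotProduct_self (by omega : 2 ≤ m), z_dotProduct_gram_mulVec hm]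
  have eigenvalues : (b0 m c + (m - 2) * b1 m c) * (m * (m - 1) / 2 * b0 m c) -
      b1 m c * (m * (m - 1) * (b0 m c + (m - 2) * b1 m c)) =
        (b0 m c - 2 * b1 m c) * (b0 m c + (m - 2) * b1 m c) * (m * (m - 1) / 2) := by ring
  rw [eigenvalues, inv_mul_cancel_left₀ (mul_ne_zero h₀ h₁)]
  simp [dotProduct]

/-- G-optimality of the uniform design measure: if `b₀ − 2b₁ > 0` and `b₀ + (m−2)b₁ > 0`,
then `M₀` is invertible and `x(a)ᵀ M₀⁻¹ x(a) = p = m(m−1)/2 + 1` for every treatment `a`. -/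
theorem statement13 {m : ℕ} (hm : 3 ≤ m) (c : ℕ → ℝ) (hc1 : c 1 = 1)
    (hmono : ∀ h : ℕ, 1 ≤ h → h + 1 ≤ m - 1 → c (h + 1) ≤ c h)
    (hlast : 0 ≤ c (m - 1))
    (hpos1 : 0 < b0 m c - 2 * b1 m c)
    (hpos2 : 0 < b0 m c + ((m : ℝ) - 2) * b1 m c) :
    IsUnit (M0 m c) ∧ ∀ a : Equiv.Perm (Fin m),
      x c a ⬝ᵥ ((M0 m c)⁻¹ *ᵥ x c a) = ((m * (m - 1) / 2 + 1 : ℕ) : ℝ) :=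
  statement13_general hm c hpos1.ne' hpos2.ne'

end OofA
end

section
/- Assume b₀ − 2b₁ > 0 and b₀ + (m−2)b₁ > 0, so that M₀ is positive definite. Then for every design measure w, det M(w) ≤ det M₀, and if det M(w) = det M₀ then M(w) = M₀. (Implication (iii) of Theorem 1: any D-optimal design measure has moment matrix M₀.) -/
open Matrix Finset

namespace OofA

/-!
If `M₀` is positive definite, then `M₀⁻¹ M(w)` has nonnegative eigenvalues, and by AM-GM its
determinant is at most `1`, with equality only for `M(w) = M₀`, as soon as its trace
`∑ₐ w(a) x(a)ᵀ M₀⁻¹ x(a)` is at most `p`. Relabelling components acts linearly on the vectors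
`x(a)`, transitively on the treatments, and preserves `M₀`; hence the variance function
`x(a)ᵀ M₀⁻¹ x(a)` is constant, and the constant is its mean `tr (M₀⁻¹ M₀) = p`.

For positive definiteness, extend `u ∈ ℝ^q` to a skew kernel `U` on the components. As permutations
act transitively on pairs and triples of distinct positions, the second moments of `z` only involve
`b₀` and `b₁`, and the mean of `(∑ U i j z_{ij})²` over all ordered pairs is
`4 b₁ ∑ᵢ rᵢ² + 2 (b₀ - 2 b₁) ∑ U i j²` with `rᵢ` the row sums of `U`. Since
`0 ≤ 2 ∑ᵢ rᵢ² ≤ m ∑ U i j²`, it is positive under the two hypotheses on `b₀` and `b₁`.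
-/

section AMGM

variable {ι : Type*} {s : Finset ι} {f : ι → ℝ}

lemma prod_le_one_of_sum_le_card (hf : ∀ i ∈ s, 0 ≤ f i) (hsum : ∑ i ∈ s, f i ≤ #s) :
    ∏ i ∈ s, f i ≤ 1 :=
  calc ∏ i ∈ s, f i ≤ ∏ i ∈ s, Real.exp (f i - 1) :=
        prod_le_prod hf fun i _ => by linarith [Real.add_one_le_exp (f i - 1)]
    _ = Real.exp (∑ i ∈ s, f i - #s) := by simp [← Real.exp_sum]
    _ ≤ 1 := Real.exp_le_one_iff.mpr (sub_nonpos.mpr hsum)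

lemma eq_one_of_prod_eq_one_of_sum_le_card (hf : ∀ i ∈ s, 0 ≤ f i) (hsum : ∑ i ∈ s, f i ≤ #s)
    (hprod : ∏ i ∈ s, f i = 1) : ∀ i ∈ s, f i = 1 := by
  have hpos : ∀ i ∈ s, 0 < f i := fun i hi =>
    (hf i hi).lt_of_ne' (prod_ne_zero_iff.mp (hprod ▸ one_ne_zero) i hi)
  by_contra! ⟨i, hi, hi_ne⟩
  have hlog : ∑ i ∈ s, Real.log (f i) < ∑ i ∈ s, (f i - 1) :=
    sum_lt_sum (fun j hj => Real.log_le_sub_one_of_pos (hpos j hj))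
      ⟨i, hi, Real.log_lt_sub_one_of_pos (hpos i hi) hi_ne⟩
  rw [← Real.log_prod fun j hj => (hpos j hj).ne', hprod, Real.log_one] at hlog
  simp only [sum_sub_distrib, sum_const, nsmul_eq_mul, mul_one] at hlog
  linarith

end AMGM

section DetTrace

open scoped ComplexOrder MatrixOrder

variable {𝕜 n : Type*} [RCLike 𝕜] [Fintype n] [DecidableEq n] {A M N : Matrix n n 𝕜}

lemma sum_eigenvalues_le_card (hN : N.IsHermitian) (htr : N.trace ≤ Fintype.card n) :
    ∑ i, hN.eigenvalues i ≤ #(univ : Finset n) := by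
  rw [hN.trace_eq_sum_eigenvalues] at htr
  exact_mod_cast htr

lemma det_le_one_of_trace_le_card (hN : N.PosSemidef) (htr : N.trace ≤ Fintype.card n) :
    N.det ≤ 1 := by
  rw [hN.1.det_eq_prod_eigenvalues]
  exact_mod_cast prod_le_one_of_sum_le_card (fun i _ => hN.eigenvalues_nonneg i)
    (sum_eigenvalues_le_card hN.1 htr)

lemma eq_one_of_det_eq_one_of_trace_le_card (hN : N.PosSemidef)
    (htr : N.trace ≤ Fintype.card n) (hdet : N.det = 1) : N = 1 := by
  rw [hN.1.det_eq_prod_eigenvalues] at hdet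
  have heig := eq_one_of_prod_eq_one_of_sum_le_card (fun i _ => hN.eigenvalues_nonneg i)
    (sum_eigenvalues_le_card hN.1 htr) (by exact_mod_cast hdet)
  have hdiag : (RCLike.ofReal ∘ hN.1.eigenvalues : n → 𝕜) = fun _ => 1 := by
    funext i
    simp [heig i (mem_univ i)]
  rw [hN.1.spectral_theorem, hdiag, diagonal_one, map_one]

lemma exists_eq_conjTranspose_mul_mul (hA : A.PosDef) (hM : M.PosSemidef) :
    ∃ B N : Matrix n n 𝕜, A = Bᴴ * B ∧ M = Bᴴ * N * B ∧ N.PosSemidef ∧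
      N.trace = (A⁻¹ * M).trace := by
  obtain ⟨B, hB⟩ := CStarAlgebra.nonneg_iff_eq_star_mul_self.mp hA.posSemidef.nonneg
  rw [star_eq_conjTranspose] at hB
  have hunit : IsUnit (Bᴴ.det * B.det) := by
    simpa only [← det_mul, ← hB] using hA.det_pos.ne'.isUnit
  have hBH : IsUnit Bᴴ.det := isUnit_of_mul_isUnit_left hunit
  have hBdet : IsUnit B.det := isUnit_of_mul_isUnit_right hunit
  refine ⟨B, (B⁻¹)ᴴ * M * B⁻¹, hB, ?_, hM.conjTranspose_mul_mul_same _, ?_⟩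
  · rw [conjTranspose_nonsing_inv, Matrix.mul_assoc,
      nonsing_inv_mul_cancel_right _ _ hBdet, mul_nonsing_inv_cancel_left _ _ hBH]
  · rw [trace_mul_comm, ← Matrix.mul_assoc, hB, Matrix.mul_inv_rev, conjTranspose_nonsing_inv]

lemma det_le_det_of_trace_inv_mul_le_card (hA : A.PosDef) (hM : M.PosSemidef)
    (htr : (A⁻¹ * M).trace ≤ Fintype.card n) : M.det ≤ A.det := by
  obtain ⟨B, N, rfl, rfl, hN, hNtr⟩ := exists_eq_conjTranspose_mul_mul hA hM
  calc (Bᴴ * N * B).det = (Bᴴ * B).det * N.det := by simp only [det_mul]; ring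
    _ ≤ (Bᴴ * B).det := mul_le_of_le_one_right hA.det_pos.le
        (det_le_one_of_trace_le_card hN (hNtr ▸ htr))

lemma eq_of_det_eq_det_of_trace_inv_mul_le_card (hA : A.PosDef) (hM : M.PosSemidef)
    (htr : (A⁻¹ * M).trace ≤ Fintype.card n) (hdet : M.det = A.det) : M = A := by
  obtain ⟨B, N, rfl, rfl, hN, hNtr⟩ := exists_eq_conjTranspose_mul_mul hA hM
  have hNdet : N.det = 1 := by
    refine (mul_eq_left₀ hA.det_pos.ne').mp (Eq.trans ?_ hdet)
    simp only [det_mul]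
    ring
  rw [eq_one_of_det_eq_one_of_trace_le_card hN (hNtr ▸ htr) hNdet, Matrix.mul_one]

end DetTrace

section InfoMatrix

variable {R α n : Type*} [Fintype α]

/-- The information matrix `∑ₐ w(a) f(a) f(a)ᵀ` of a weighting `w` of the design points `α` in the
linear model with regression vectors `f`; `momentMatrix c` is the case `f = x c`. -/
def infoMatrix [CommRing R] (f : α → n → R) (w : α → R) : Matrix n n R :=
  ∑ a, w a • vecMulVec (f a) (f a)

section CommRing

variable [CommRing R] [Fintype n] (f : α → n → R) (w : α → R)

lemma trace_mul_infoMatrix (A : Matrix n n R) :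
    (A * infoMatrix f w).trace = ∑ a, w a * (f a ⬝ᵥ A *ᵥ f a) := by
  simp only [infoMatrix, Matrix.mul_sum, trace_sum, Matrix.mul_smul, trace_smul, mul_vecMulVec,
    trace_vecMulVec, dotProduct_comm (A *ᵥ _), smul_eq_mul]

lemma dotProduct_infoMatrix_mulVec (v : n → R) :
    v ⬝ᵥ infoMatrix f w *ᵥ v = ∑ a, w a * (v ⬝ᵥ f a) ^ 2 := by
  simp only [infoMatrix, sum_mulVec, dotProduct_sum, smul_mulVec, vecMulVec_mulVec,
    dotProduct_smul, op_smul_eq_mul, smul_eq_mul, dotProduct_comm (f _) v, sq]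

lemma mul_infoMatrix_mul_transpose (P : Matrix n n R) :
    P * infoMatrix f w * Pᵀ = infoMatrix (fun a => P *ᵥ f a) w := by
  simp only [infoMatrix, Matrix.mul_sum, Matrix.sum_mul, Matrix.mul_smul, Matrix.smul_mul,
    mul_vecMulVec, vecMulVec_mul, vecMul_transpose]

variable {f w} [DecidableEq n]

lemma transpose_mul_inv_mul {M P : Matrix n n R} (hM : IsUnit M.det) (hP : P * M * Pᵀ = M) :
    Pᵀ * M⁻¹ * P = M⁻¹ := by
  have hdet : IsUnit (P.det * M.det * Pᵀ.det) := by rwa [← det_mul, ← det_mul, hP]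
  have hPT : IsUnit Pᵀ.det := isUnit_of_mul_isUnit_right hdet
  have hPdet : IsUnit P.det := by rwa [det_transpose] at hPT
  conv_lhs => rw [← hP, Matrix.mul_inv_rev, Matrix.mul_inv_rev]
  rw [mul_nonsing_inv_cancel_left _ _ hPT, nonsing_inv_mul_cancel_right _ _ hPdet]

lemma dotProduct_inv_infoMatrix_mulVec_apply {σ : Equiv.Perm α} {P : Matrix n n R}
    (hP : ∀ a, P *ᵥ f a = f (σ a)) (hw : ∀ a, w (σ a) = w a)
    (hM : IsUnit (infoMatrix f w).det) (a : α) :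
    f (σ a) ⬝ᵥ (infoMatrix f w)⁻¹ *ᵥ f (σ a) = f a ⬝ᵥ (infoMatrix f w)⁻¹ *ᵥ f a := by
  have hinv : P * infoMatrix f w * Pᵀ = infoMatrix f w := by
    rw [mul_infoMatrix_mul_transpose]
    exact Fintype.sum_equiv σ _ _ fun a => by simp only [hP, hw]
  conv_rhs => rw [← transpose_mul_inv_mul hM hinv]
  rw [← mulVec_mulVec, ← mulVec_mulVec, dotProduct_mulVec (f a), vecMul_transpose, hP]

end CommRing

variable {f : α → n → ℝ}

lemma posSemidef_infoMatrix [Finite n] {w : α → ℝ} (hw : ∀ a, 0 ≤ w a) :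
    (infoMatrix f w).PosSemidef :=
  posSemidef_sum univ fun a _ => (posSemidef_vecMulVec_self_star (f a)).smul (hw a)

variable [Fintype n] [DecidableEq n]

-- The easy half of the Kiefer–Wolfowitz equivalence theorem.
theorem det_infoMatrix_le_of_dotProduct_inv_mulVec_le {A : Matrix n n ℝ} (hA : A.PosDef)
    (hvar : ∀ a, f a ⬝ᵥ A⁻¹ *ᵥ f a ≤ Fintype.card n) {w : α → ℝ} (hw : ∀ a, 0 ≤ w a)
    (hw_sum : ∑ a, w a = 1) :
    (infoMatrix f w).det ≤ A.det ∧ ((infoMatrix f w).det = A.det → infoMatrix f w = A) := by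
  have htr : (A⁻¹ * infoMatrix f w).trace ≤ Fintype.card n :=
    calc (A⁻¹ * infoMatrix f w).trace = ∑ a, w a * (f a ⬝ᵥ A⁻¹ *ᵥ f a) :=
          trace_mul_infoMatrix f w A⁻¹
      _ ≤ ∑ a, w a * Fintype.card n := by gcongr with a; exacts [hw a, hvar a]
      _ = Fintype.card n := by rw [← sum_mul, hw_sum, one_mul]
  exact ⟨det_le_det_of_trace_inv_mul_le_card hA (posSemidef_infoMatrix hw) htr,
    eq_of_det_eq_det_of_trace_inv_mul_le_card hA (posSemidef_infoMatrix hw) htr⟩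

theorem det_infoMatrix_le_of_isPretransitive {G : Type*} [Group G] [MulAction G α]
    [MulAction.IsPretransitive G α] {P : G → Matrix n n ℝ}
    (hP : ∀ g a, P g *ᵥ f a = f (g • a)) {w₀ : α → ℝ} (hw₀ : ∀ (g : G) a, w₀ (g • a) = w₀ a)
    (hw₀_sum : ∑ a, w₀ a = 1) (hM : (infoMatrix f w₀).PosDef) {w : α → ℝ} (hw : ∀ a, 0 ≤ w a)
    (hw_sum : ∑ a, w a = 1) :
    (infoMatrix f w).det ≤ (infoMatrix f w₀).det ∧
      ((infoMatrix f w).det = (infoMatrix f w₀).det → infoMatrix f w = infoMatrix f w₀) := by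
  have hunit : IsUnit (infoMatrix f w₀).det := hM.det_pos.ne'.isUnit
  refine det_infoMatrix_le_of_dotProduct_inv_mulVec_le hM (fun a => le_of_eq ?_) hw hw_sum
  have hconst : ∀ b, f b ⬝ᵥ (infoMatrix f w₀)⁻¹ *ᵥ f b = f a ⬝ᵥ (infoMatrix f w₀)⁻¹ *ᵥ f a := by
    intro b
    obtain ⟨g, rfl⟩ := MulAction.exists_smul_eq G a b
    exact dotProduct_inv_infoMatrix_mulVec_apply (σ := MulAction.toPerm g) (hP g) (hw₀ g) hunit a
  -- The `w₀`-average of the variance function `b ↦ f(b)ᵀ M⁻¹ f(b)` is `tr (M⁻¹ M)`.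
  calc f a ⬝ᵥ (infoMatrix f w₀)⁻¹ *ᵥ f a
      = ∑ b, w₀ b * (f b ⬝ᵥ (infoMatrix f w₀)⁻¹ *ᵥ f b) := by
        simp only [hconst, ← sum_mul, hw₀_sum, one_mul]
    _ = ((infoMatrix f w₀)⁻¹ * infoMatrix f w₀).trace := (trace_mul_infoMatrix _ _ _).symm
    _ = Fintype.card n := by rw [nonsing_inv_mul _ hunit, trace_one]

end InfoMatrix

section Averages

open scoped BigOperators

lemma injective_vec_two {ι : Type*} {p q : ι} (hpq : p ≠ q) : Function.Injective ![p, q] := by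
  simp [Function.Injective, Fin.forall_fin_two, hpq, hpq.symm]

lemma injective_vec_three {ι : Type*} {p q r : ι} (hpq : p ≠ q) (hpr : p ≠ r) (hqr : q ≠ r) :
    Function.Injective ![p, q, r] := by
  simp [Function.Injective, Fin.forall_fin_succ, hpq, hpq.symm, hpr, hpr.symm, hqr, hqr.symm]

lemma expect_smul_eq_expect {G X E : Type*} [Group G] [Fintype G] [Fintype X] [MulAction G X]
    [MulAction.IsPretransitive G X] [AddCommMonoid E] [Module ℚ≥0 E] (F : X → E) (x : X) :
    𝔼 g : G, F (g • x) = 𝔼 y, F y := by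
  have hconst : ∀ y, 𝔼 g : G, F (g • y) = 𝔼 g : G, F (g • x) := by
    intro y
    obtain ⟨h, rfl⟩ := MulAction.exists_smul_eq G x y
    exact Fintype.expect_equiv (Equiv.mulRight h) _ _ fun g => by simp [mul_smul]
  have : Nonempty X := ⟨x⟩
  calc 𝔼 g : G, F (g • x) = 𝔼 y : X, 𝔼 g : G, F (g • y) := by simp [hconst]
    _ = 𝔼 g : G, 𝔼 y : X, F (g • y) := expect_comm ..
    _ = 𝔼 _g : G, 𝔼 y : X, F y := expect_congr rfl fun g _ =>
        Fintype.expect_equiv (MulAction.toPerm g) _ _ fun _ => rfl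
    _ = 𝔼 y, F y := Fintype.expect_const _

variable {ι E : Type*} [Fintype ι] [DecidableEq ι] [AddCommMonoid E]

lemma sum_embedding_fin_two (F : ι → ι → E) :
    ∑ e : Fin 2 ↪ ι, F (e 0) (e 1) = ∑ p, ∑ q, if p ≠ q then F p q else 0 := by
  rw [← Fintype.sum_prod_type' (f := fun p q => if p ≠ q then F p q else 0), ← sum_filter]
  refine sum_bij (fun e _ => (e 0, e 1)) ?_ ?_ ?_ fun _ _ => rfl
  · simp
  · intro e _ e' _ h
    ext i
    fin_cases i <;> simp_all
  · rintro ⟨p, q⟩ hpq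
    exact ⟨⟨![p, q], injective_vec_two (mem_filter.mp hpq).2⟩, mem_univ _, rfl⟩

lemma sum_embedding_fin_three (F : ι → ι → ι → E) :
    ∑ e : Fin 3 ↪ ι, F (e 0) (e 1) (e 2) =
      ∑ p, ∑ q, ∑ r, if p ≠ q ∧ p ≠ r ∧ q ≠ r then F p q r else 0 := by
  rw [sum_congr rfl fun p _ => (Fintype.sum_prod_type' fun q r =>
      if p ≠ q ∧ p ≠ r ∧ q ≠ r then F p q r else 0).symm,
    ← Fintype.sum_prod_type' (f := fun p (t : ι × ι) =>
      if p ≠ t.1 ∧ p ≠ t.2 ∧ t.1 ≠ t.2 then F p t.1 t.2 else 0), ← sum_filter]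
  refine sum_bij (fun e _ => (e 0, e 1, e 2)) ?_ ?_ ?_ fun _ _ => rfl
  · simp
  · intro e _ e' _ h
    ext i
    fin_cases i <;> simp_all
  · rintro ⟨p, q, r⟩ hpqr
    obtain ⟨hpq, hpr, hqr⟩ := (mem_filter.mp hpqr).2
    exact ⟨⟨![p, q, r], injective_vec_three hpq hpr hqr⟩, mem_univ _, rfl⟩

lemma sum_sum_ne_eq_sum_sum_lt [LinearOrder ι] (F : ι → ι → E) :
    (∑ p, ∑ q, if p ≠ q then F p q else 0) = ∑ p, ∑ q, if p < q then F p q + F q p else 0 := by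
  have hsplit : ∀ p q, (if p ≠ q then F p q else 0) =
      (if p < q then F p q else 0) + if q < p then F p q else 0 := by
    intro p q
    rcases lt_trichotomy p q with h | rfl | h <;> simp [*, ne_of_lt, ne_of_gt, not_lt_of_gt]
  simp only [hsplit, ite_add_zero, sum_add_distrib]
  congr 1
  exact sum_comm

lemma sum_sum_sum_ne_eq_sum_sum_sum_lt [LinearOrder ι] (F : ι → ι → ι → E) :
    (∑ p, ∑ q, ∑ r, if p ≠ q ∧ p ≠ r ∧ q ≠ r then F p q r else 0) =
      ∑ p, ∑ q, ∑ r, if p < q ∧ q < r then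
        F p q r + F p r q + (F q p r + F q r p) + (F r p q + F r q p) else 0 := by
  have hsplit : ∀ p q r, (if p ≠ q ∧ p ≠ r ∧ q ≠ r then F p q r else 0) =
      (if p < q ∧ q < r then F p q r else 0) + (if p < r ∧ r < q then F p q r else 0) +
      ((if q < p ∧ p < r then F p q r else 0) + (if r < p ∧ p < q then F p q r else 0)) +
      ((if q < r ∧ r < p then F p q r else 0) + if r < q ∧ q < p then F p q r else 0) := by
    intro p q r
    grind
  have swap₁ (A : ι → ι → ι → E) : ∑ p, ∑ q, ∑ r, A q p r = ∑ p, ∑ q, ∑ r, A p q r := sum_comm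
  have swap₂ (A : ι → ι → ι → E) : ∑ p, ∑ q, ∑ r, A p r q = ∑ p, ∑ q, ∑ r, A p q r :=
    sum_congr rfl fun _ _ => sum_comm
  simp only [hsplit, ite_add_zero, sum_add_distrib]
  refine congrArg₂ _ (congrArg₂ _ (congrArg₂ _ rfl ?_) (congrArg₂ _ ?_ ?_)) (congrArg₂ _ ?_ ?_)
  · exact swap₂ fun p q r => if p < q ∧ q < r then F p r q else 0
  · exact swap₁ fun p q r => if p < q ∧ q < r then F q p r else 0
  · exact (swap₂ fun p q r => if r < p ∧ p < q then F p q r else 0).symm.trans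
      (swap₁ fun p q r => if p < q ∧ q < r then F q r p else 0)
  · exact (swap₁ fun p q r => if q < r ∧ r < p then F p q r else 0).symm.trans
      (swap₂ fun p q r => if p < q ∧ q < r then F r p q else 0)
  · exact (swap₁ fun p q r => if r < q ∧ q < p then F p q r else 0).symm.trans
      ((swap₂ fun p q r => if r < p ∧ p < q then F q p r else 0).symm.trans
      (swap₁ fun p q r => if p < q ∧ q < r then F r q p else 0))

variable [Module ℚ≥0 E]

lemma expect_perm_apply_two (F : ι → ι → E) {i j : ι} (hij : i ≠ j) :
    𝔼 b : Equiv.Perm ι, F (b i) (b j) = 𝔼 e : Fin 2 ↪ ι, F (e 0) (e 1) :=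
  have := Equiv.Perm.isMultiplyPretransitive ι 2
  expect_smul_eq_expect (G := Equiv.Perm ι) (fun e : Fin 2 ↪ ι => F (e 0) (e 1))
    ⟨![i, j], injective_vec_two hij⟩

lemma expect_perm_apply_three (F : ι → ι → ι → E) {i j k : ι} (hij : i ≠ j) (hik : i ≠ k)
    (hjk : j ≠ k) :
    𝔼 b : Equiv.Perm ι, F (b i) (b j) (b k) = 𝔼 e : Fin 3 ↪ ι, F (e 0) (e 1) (e 2) :=
  have := Equiv.Perm.isMultiplyPretransitive ι 3
  expect_smul_eq_expect (G := Equiv.Perm ι) (fun e : Fin 3 ↪ ι => F (e 0) (e 1) (e 2))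
    ⟨![i, j, k], injective_vec_three hij hik hjk⟩

end Averages

section SkewKernel

open scoped BigOperators

variable {ι : Type*} {s U : ι → ι → ℝ} {β₀ β₁ : ℝ}

/-- Skew-symmetric real kernels; a kernel on `ι` is a square matrix, written as a function because
its indices get permuted all the time. -/
def IsSkew (s : ι → ι → ℝ) : Prop := ∀ i j, s j i = -s i j

lemma IsSkew.apply_self (hs : IsSkew s) (i : ι) : s i i = 0 := self_eq_neg.mp (hs i i)

section RowSums

variable [Fintype ι]

lemma IsSkew.sum_sum_mul_sub (hU : IsSkew U) (g : ι → ℝ) :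
    ∑ i, ∑ j, U i j * (g i - g j) = 2 * ∑ i, g i * ∑ j, U i j := by
  have hcol : ∑ i, ∑ j, U i j * g j = -∑ i, ∑ j, U i j * g i := by
    rw [sum_comm]
    simp only [← sum_neg_distrib, ← neg_mul, ← hU _ _]
  simp only [mul_sub, sum_sub_distrib, hcol, ← sum_mul, mul_comm (g _)]
  ring

lemma IsSkew.sum_sum_eq_zero (hU : IsSkew U) : ∑ i, ∑ j, U i j = 0 := by
  refine self_eq_neg.mp ?_
  simp only [← sum_neg_distrib, ← hU _ _]
  exact sum_comm

lemma sum_sum_sub_sq {R : Type*} [CommRing R] (g : ι → R) :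
    ∑ i, ∑ j, (g i - g j) ^ 2 = 2 * Fintype.card ι * ∑ i, g i ^ 2 - 2 * (∑ i, g i) ^ 2 := by
  simp only [sub_sq, sum_add_distrib, sum_sub_distrib, ← mul_sum, ← sum_mul, mul_assoc, sum_const,
    card_univ, nsmul_eq_mul]
  ring

lemma IsSkew.two_mul_sum_sq_sum_le (hU : IsSkew U) :
    2 * ∑ i, (∑ j, U i j) ^ 2 ≤ Fintype.card ι * ∑ i, ∑ j, U i j ^ 2 := by
  cases isEmpty_or_nonempty ι
  · simp
  have hcard : (0 : ℝ) < Fintype.card ι := by exact_mod_cast Fintype.card_pos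
  set r : ι → ℝ := fun i => ∑ j, U i j with hr
  have hcross : ∑ i, ∑ j, U i j * (r i - r j) = 2 * ∑ i, r i ^ 2 := by
    rw [hU.sum_sum_mul_sub]
    simp only [hr, sq]
  have hdiff : ∑ i, ∑ j, (r i - r j) ^ 2 = 2 * Fintype.card ι * ∑ i, r i ^ 2 := by
    rw [sum_sum_sub_sq, hU.sum_sum_eq_zero]
    ring
  have hexpand : ∑ i, ∑ j, (Fintype.card ι * U i j - (r i - r j)) ^ 2 =
      Fintype.card ι * (Fintype.card ι * ∑ i, ∑ j, U i j ^ 2 - 2 * ∑ i, r i ^ 2) := by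
    simp only [sub_sq (_ * U _ _), mul_pow, mul_assoc, sum_add_distrib, sum_sub_distrib, ← mul_sum,
      hcross, hdiff]
    ring
  have hnonneg : 0 ≤ ∑ i, ∑ j, (Fintype.card ι * U i j - (r i - r j)) ^ 2 := by positivity
  exact sub_nonneg.mp (nonneg_of_mul_nonneg_right (hexpand ▸ hnonneg) hcard)

end RowSums

variable [Fintype ι] [DecidableEq ι]

/-- The mixed second moment of the entries `(i, j)` and `(k, l)` of the kernel `s` after a uniformly
random relabelling of its indices. -/
noncomputable def permMoment (s : ι → ι → ℝ) (i j k l : ι) : ℝ :=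
  𝔼 b : Equiv.Perm ι, s (b i) (b j) * s (b k) (b l)

lemma expect_sq_eq_sum_permMoment (s U : ι → ι → ℝ) :
    𝔼 b : Equiv.Perm ι, (∑ i, ∑ j, U i j * s (b i) (b j)) ^ 2 =
      ∑ i, ∑ j, U i j * ∑ k, ∑ l, U k l * permMoment s i j k l := by
  simp only [sq, sum_mul]
  simp only [permMoment, mul_sum, mul_expect, expect_sum_comm, mul_assoc,
    mul_left_comm (s _ _) (U _ _)]

lemma permMoment_perm_apply (s : ι → ι → ℝ) (g : Equiv.Perm ι) (i j k l : ι) :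
    permMoment s (g i) (g j) (g k) (g l) = permMoment s i j k l :=
  Fintype.expect_equiv (Equiv.mulRight g) _ _ fun _ => rfl

namespace IsSkew

lemma permMoment_swap_left (hs : IsSkew s) (i j k l : ι) :
    permMoment s j i k l = -permMoment s i j k l := by
  simp only [permMoment, ← expect_neg_distrib, ← neg_mul, ← hs _ _]

lemma permMoment_swap_right (hs : IsSkew s) (i j k l : ι) :
    permMoment s i j l k = -permMoment s i j k l := by
  simp only [permMoment, ← expect_neg_distrib, ← mul_neg, ← hs _ _]

lemma expect_perm_apply (hs : IsSkew s) (i j : ι) :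
    𝔼 b : Equiv.Perm ι, s (b i) (b j) = 0 := by
  refine self_eq_neg.mp ?_
  rw [← expect_neg_distrib]
  refine Fintype.expect_equiv (Equiv.mulRight (Equiv.swap i j)) _ _ fun b => ?_
  simp [hs (b i)]

lemma expect_sum_perm_apply (hs : IsSkew s) (U : ι → ι → ℝ) :
    𝔼 b : Equiv.Perm ι, ∑ i, ∑ j, U i j * s (b i) (b j) = 0 := by
  simp only [expect_sum_comm, ← mul_expect, hs.expect_perm_apply, mul_zero, sum_const_zero]

lemma permMoment_eq_zero_of_disjoint (hs : IsSkew s) {i j k l : ι} (hik : i ≠ k) (hil : i ≠ l)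
    (hjk : j ≠ k) (hjl : j ≠ l) : permMoment s i j k l = 0 := by
  refine self_eq_neg.mp ?_
  conv_lhs => rw [← permMoment_perm_apply s (Equiv.swap i j)]
  rw [Equiv.swap_apply_left, Equiv.swap_apply_right, Equiv.swap_apply_of_ne_of_ne hik.symm hjk.symm,
    Equiv.swap_apply_of_ne_of_ne hil.symm hjl.symm, hs.permMoment_swap_left]

lemma permMoment_self_left (hs : IsSkew s) (i k l : ι) : permMoment s i i k l = 0 :=
  self_eq_neg.mp (hs.permMoment_swap_left i i k l)

lemma permMoment_self_right (hs : IsSkew s) (i j k : ι) : permMoment s i j k k = 0 :=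
  self_eq_neg.mp (hs.permMoment_swap_right i j k k)

lemma permMoment_eq (hs : IsSkew s) (h₀ : ∀ i j, i ≠ j → permMoment s i j i j = β₀)
    (h₁ : ∀ i j k, i ≠ j → i ≠ k → j ≠ k → permMoment s i j i k = β₁) (i j k l : ι) :
    permMoment s i j k l =
      β₁ * ((if i = k then 1 else 0) + (if j = l then 1 else 0) - (if i = l then 1 else 0)
        - if j = k then 1 else 0)
      + (β₀ - 2 * β₁) * ((if i = k ∧ j = l then 1 else 0) - if i = l ∧ j = k then 1 else 0) := by
  rcases eq_or_ne i j with rfl | hij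
  · rw [hs.permMoment_self_left]
    grind
  rcases eq_or_ne k l with rfl | hkl
  · rw [hs.permMoment_self_right]
    grind
  -- Up to sign, `(i, j)` and `(k, l)` share both indices, exactly one, or none.
  have hneg_left := hs.permMoment_swap_left
  have hneg_right := hs.permMoment_swap_right
  have hzero := @hs.permMoment_eq_zero_of_disjoint _ _ _ _ i j k l
  grind

lemma sum_sum_mul_permMoment (hs : IsSkew s) (h₀ : ∀ i j, i ≠ j → permMoment s i j i j = β₀)
    (h₁ : ∀ i j k, i ≠ j → i ≠ k → j ≠ k → permMoment s i j i k = β₁) (hU : IsSkew U) (i j : ι) :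
    ∑ k, ∑ l, U k l * permMoment s i j k l =
      2 * β₁ * (∑ k, U i k - ∑ k, U j k) + 2 * (β₀ - 2 * β₁) * U i j := by
  have hrow (i : ι) : ∑ k, ∑ l, U k l * (if i = k then 1 else 0) = ∑ k, U i k := by
    rw [sum_comm]
    simp
  have hcol (j : ι) : ∑ k, ∑ l, U k l * (if j = l then 1 else 0) = -∑ k, U j k := by
    simp [hU j]
  have hentry (i j : ι) : ∑ k, ∑ l, U k l * (if i = k ∧ j = l then 1 else 0) = U i j := by
    simp [ite_and]
  have hentry' : ∑ k, ∑ l, U k l * (if i = l ∧ j = k then 1 else 0) = -U i j := by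
    simpa only [and_comm, hU i j] using hentry j i
  have hterm (k l : ι) : U k l * permMoment s i j k l =
      β₁ * (U k l * (if i = k then 1 else 0) + U k l * (if j = l then 1 else 0)
        - U k l * (if i = l then 1 else 0) - U k l * if j = k then 1 else 0)
      + (β₀ - 2 * β₁) * (U k l * (if i = k ∧ j = l then 1 else 0)
        - U k l * if i = l ∧ j = k then 1 else 0) := by
    rw [hs.permMoment_eq h₀ h₁]
    ring
  simp only [hterm, sum_add_distrib, sum_sub_distrib, ← mul_sum, hrow, hcol, hentry, hentry']
  ring

lemma expect_sq_sum_perm_apply (hs : IsSkew s) (h₀ : ∀ i j, i ≠ j → permMoment s i j i j = β₀)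
    (h₁ : ∀ i j k, i ≠ j → i ≠ k → j ≠ k → permMoment s i j i k = β₁) (hU : IsSkew U) :
    𝔼 b : Equiv.Perm ι, (∑ i, ∑ j, U i j * s (b i) (b j)) ^ 2 =
      4 * β₁ * ∑ i, (∑ j, U i j) ^ 2 + 2 * (β₀ - 2 * β₁) * ∑ i, ∑ j, U i j ^ 2 := by
  have hcross := hU.sum_sum_mul_sub fun i => ∑ j, U i j
  simp only [expect_sq_eq_sum_permMoment, hs.sum_sum_mul_permMoment h₀ h₁ hU, mul_add,
    mul_left_comm (U _ _), sum_add_distrib, ← mul_sum, hcross, ← sq]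
  ring

lemma expect_sq_sum_perm_apply_pos (hs : IsSkew s)
    (h₀ : ∀ i j, i ≠ j → permMoment s i j i j = β₀)
    (h₁ : ∀ i j k, i ≠ j → i ≠ k → j ≠ k → permMoment s i j i k = β₁) (hU : IsSkew U)
    (hU_ne : U ≠ 0) (hpos₁ : 0 < β₀ - 2 * β₁) (hpos₂ : 0 < β₀ + (Fintype.card ι - 2) * β₁) :
    0 < 𝔼 b : Equiv.Perm ι, (∑ i, ∑ j, U i j * s (b i) (b j)) ^ 2 := by
  obtain ⟨i, hi⟩ := Function.ne_iff.mp hU_ne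
  obtain ⟨j, hij⟩ := Function.ne_iff.mp hi
  have hrow : 0 ≤ ∑ i, (∑ j, U i j) ^ 2 := by positivity
  have hsq : 0 < ∑ i, ∑ j, U i j ^ 2 :=
    sum_pos' (fun i _ => sum_nonneg fun j _ => sq_nonneg _) ⟨i, mem_univ i,
      sum_pos' (fun j _ => sq_nonneg _) ⟨j, mem_univ j, sq_pos_iff.mpr hij⟩⟩
  rw [hs.expect_sq_sum_perm_apply h₀ h₁ hU]
  rcases le_or_gt 0 β₁ with hβ₁ | hβ₁
  · positivity
  · calc 0 < 2 * (β₀ + (Fintype.card ι - 2) * β₁) * ∑ i, ∑ j, U i j ^ 2 := by positivity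
      _ = 2 * β₁ * (Fintype.card ι * ∑ i, ∑ j, U i j ^ 2) +
          2 * (β₀ - 2 * β₁) * ∑ i, ∑ j, U i j ^ 2 := by ring
      _ ≤ 2 * β₁ * (2 * ∑ i, (∑ j, U i j) ^ 2) +
          2 * (β₀ - 2 * β₁) * ∑ i, ∑ j, U i j ^ 2 := by
        gcongr ?_ + _
        exact mul_le_mul_of_nonpos_left hU.two_mul_sum_sq_sum_le (by linarith)
      _ = 4 * β₁ * ∑ i, (∑ j, U i j) ^ 2 + 2 * (β₀ - 2 * β₁) * ∑ i, ∑ j, U i j ^ 2 := by ring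

end IsSkew

end SkewKernel

section PrecedenceKernel

variable {m : ℕ}

lemma sum_sum_lt_gap {R : Type*} [Ring R] (m : ℕ) (f : ℕ → R) :
    (∑ p : Fin m, ∑ q : Fin m, if p < q then f (q - p) else 0) =
      ∑ h ∈ Icc 1 (m - 1), ((m : R) - h) * f h :=
  calc
    _ = ∑ p ∈ range m, ∑ q ∈ range m with p < q, f (q - p) := by
      simp only [sum_filter, sum_range, Fin.lt_def]
    _ = ∑ h ∈ Icc 1 (m - 1), ∑ _p ∈ range (m - h), f h := by
      rw [sum_sigma', sum_sigma']
      refine sum_bij' (fun t _ => ⟨t.2 - t.1, t.1⟩) (fun t _ => ⟨t.2, t.2 + t.1⟩)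
        ?_ ?_ ?_ ?_ ?_ <;> grind
    _ = ∑ h ∈ Icc 1 (m - 1), ((m : R) - h) * f h := by
      refine sum_congr rfl fun h hh => ?_
      rw [sum_const, card_range, nsmul_eq_mul, Nat.cast_sub (by grind)]

lemma sum_sum_sum_lt_gap {R : Type*} [Ring R] (m : ℕ) (f : ℕ → ℕ → R) :
    (∑ p : Fin m, ∑ q : Fin m, ∑ r : Fin m, if p < q ∧ q < r then f (q - p) (r - q) else 0) =
      ∑ h₁ ∈ Icc 1 (m - 1), ∑ h₂ ∈ Icc 1 (m - 1 - h₁), ((m : R) - h₁ - h₂) * f h₁ h₂ :=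
  calc
    _ = ∑ p ∈ range m, ∑ q ∈ range m, ∑ r ∈ range m with p < q ∧ q < r, f (q - p) (r - q) := by
      simp only [sum_filter, sum_range, Fin.lt_def]
    _ = ∑ h₁ ∈ Icc 1 (m - 1), ∑ h₂ ∈ Icc 1 (m - 1 - h₁), ∑ _p ∈ range (m - h₁ - h₂), f h₁ h₂ := by
      simp only [sum_sigma']
      refine sum_bij' (fun t _ => ⟨t.2.1 - t.1, t.2.2 - t.2.1, t.1⟩)
        (fun t _ => ⟨t.2.2, t.2.2 + t.1, t.2.2 + t.1 + t.2.1⟩) ?_ ?_ ?_ ?_ ?_ <;> grind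
    _ = ∑ h₁ ∈ Icc 1 (m - 1), ∑ h₂ ∈ Icc 1 (m - 1 - h₁), ((m : R) - h₁ - h₂) * f h₁ h₂ := by
      refine sum_congr rfl fun h₁ hh₁ => sum_congr rfl fun h₂ hh₂ => ?_
      rw [sum_const, card_range, nsmul_eq_mul, Nat.cast_sub (by grind), Nat.cast_sub (by grind)]

lemma sum_sum_Icc_comm {E : Type*} [AddCommMonoid E] (n : ℕ) (f : ℕ → ℕ → E) :
    ∑ h₁ ∈ Icc 1 n, ∑ h₂ ∈ Icc 1 (n - h₁), f h₁ h₂ =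
      ∑ h₁ ∈ Icc 1 n, ∑ h₂ ∈ Icc 1 (n - h₁), f h₂ h₁ :=
  sum_comm' fun h₁ h₂ => by simp only [mem_Icc]; omega

lemma cast_descFactorial_three {R : Type*} [CommRing R] (n : ℕ) :
    (n.descFactorial 3 : R) = n * (n - 1) * (n - 2) := by
  rw [← descPochhammer_eval_eq_descFactorial]
  simp [descPochhammer_succ_right]

/-- The paper's signed coefficient as a function of positions: `z_{ij}(a)` is its value at the
positions of the components `i` and `j` in the treatment `a`. -/
def precedenceKernel (c : ℕ → ℝ) (p q : Fin m) : ℝ :=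
  if p < q then c (q - p) else if q < p then -c (p - q) else 0

lemma precedenceKernel_of_lt (c : ℕ → ℝ) {p q : Fin m} (h : p < q) :
    precedenceKernel c p q = c (q - p) := if_pos h

lemma precedenceKernel_isSkew (c : ℕ → ℝ) : IsSkew (precedenceKernel c : Fin m → Fin m → ℝ) := by
  intro p q
  rcases lt_trichotomy p q with h | rfl | h <;> simp [precedenceKernel, *, not_lt_of_gt]

lemma z_eq_precedenceKernel (c : ℕ → ℝ) (a : Equiv.Perm (Fin m)) (ij : Pairs m) :
    z c a ij = precedenceKernel c (a.symm ij.1.1) (a.symm ij.1.2) := by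
  have hne : a.symm ij.1.1 ≠ a.symm ij.1.2 := a.symm.injective.ne ij.2.ne
  rcases lt_or_gt_of_ne hne with h | h
  · simp [z, precedenceKernel, h, Nat.dist_eq_sub_of_le h.le]
  · simp [z, precedenceKernel, h, h.not_gt, Nat.dist_eq_sub_of_le_right h.le]

lemma permMoment_precedenceKernel_eq_b0 (c : ℕ → ℝ) {i j : Fin m} (hij : i ≠ j) :
    permMoment (precedenceKernel c) i j i j = b0 m c := by
  have hpair : ∀ p q : Fin m, p < q →
      precedenceKernel c p q * precedenceKernel c p q +
        precedenceKernel c q p * precedenceKernel c q p = 2 * c (q - p) ^ 2 := by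
    intro p q hpq
    rw [precedenceKernel_isSkew c p q, precedenceKernel_of_lt c hpq]
    ring
  have hsum := sum_sum_lt_gap m fun h => 2 * c h ^ 2
  rw [permMoment,
    expect_perm_apply_two (fun p q => precedenceKernel c p q * precedenceKernel c p q) hij,
    Fintype.expect_eq_sum_div_card,
    sum_embedding_fin_two (fun p q => precedenceKernel c p q * precedenceKernel c p q),
    sum_sum_ne_eq_sum_sum_lt, Fintype.card_embedding_eq, Fintype.card_fin, Fintype.card_fin,
    Nat.cast_descFactorial_two]
  simp +contextual only [hpair, hsum]
  simp only [b0, mul_left_comm _ (2 : ℝ), ← mul_sum]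
  ring

lemma permMoment_precedenceKernel_eq_b1 (c : ℕ → ℝ) {i j k : Fin m} (hij : i ≠ j) (hik : i ≠ k)
    (hjk : j ≠ k) : permMoment (precedenceKernel c) i j i k = b1 m c := by
  set F : Fin m → Fin m → Fin m → ℝ := fun p q r => precedenceKernel c p q * precedenceKernel c p r
  set f : ℕ → ℕ → ℝ := fun h₁ h₂ =>
    2 * (c h₁ * c (h₁ + h₂)) + 2 * (c h₂ * c (h₁ + h₂)) - 2 * (c h₁ * c h₂) with hf
  have htriple : ∀ p q r : Fin m, p < q → q < r →
      F p q r + F p r q + (F q p r + F q r p) + (F r p q + F r q p) = f (q - p) (r - q) := by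
    intro p q r hpq hqr
    have hgap : (r - p : ℕ) = (q - p) + (r - q) := by omega
    simp only [F, precedenceKernel_isSkew c p q, precedenceKernel_isSkew c p r,
      precedenceKernel_isSkew c q r, precedenceKernel_of_lt c hpq, precedenceKernel_of_lt c hqr,
      precedenceKernel_of_lt c (hpq.trans hqr), hgap, f]
    ring
  have hsymm : ∑ h₁ ∈ Icc 1 (m - 1), ∑ h₂ ∈ Icc 1 (m - 1 - h₁),
        ((m : ℝ) - h₁ - h₂) * (c h₂ * c (h₁ + h₂)) =
      ∑ h₁ ∈ Icc 1 (m - 1), ∑ h₂ ∈ Icc 1 (m - 1 - h₁),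
        ((m : ℝ) - h₁ - h₂) * (c h₁ * c (h₁ + h₂)) := by
    rw [sum_sum_Icc_comm]
    simp only [sub_right_comm, add_comm]
  have hsum : ∑ h₁ ∈ Icc 1 (m - 1), ∑ h₂ ∈ Icc 1 (m - 1 - h₁), ((m : ℝ) - h₁ - h₂) * f h₁ h₂ =
      2 * ∑ h₁ ∈ Icc 1 (m - 1), ∑ h₂ ∈ Icc 1 (m - 1 - h₁),
        ((m : ℝ) - h₁ - h₂) * c h₁ * (2 * c (h₁ + h₂) - c h₂) := by
    simp only [hf, mul_add, mul_sub, mul_assoc, mul_left_comm _ (2 : ℝ), sum_add_distrib,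
      sum_sub_distrib, ← mul_sum] at hsymm ⊢
    linarith
  rw [permMoment, expect_perm_apply_three F hij hik hjk, Fintype.expect_eq_sum_div_card,
    sum_embedding_fin_three F, sum_sum_sum_ne_eq_sum_sum_sum_lt, Fintype.card_embedding_eq,
    Fintype.card_fin, Fintype.card_fin, cast_descFactorial_three]
  simp +contextual only [htriple, sum_sum_sum_lt_gap, hsum]
  rw [b1]
  ring

end PrecedenceKernel

section MomentMatrix

open scoped BigOperators

variable {m : ℕ}

lemma sum_sum_eq_two_mul_sum_pairs {F : Fin m → Fin m → ℝ} (hF : ∀ i j, F j i = F i j)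
    (hF_diag : ∀ i, F i i = 0) : ∑ i, ∑ j, F i j = 2 * ∑ ij : Pairs m, F ij.1.1 ij.1.2 :=
  calc ∑ i, ∑ j, F i j = ∑ i, ∑ j, if i ≠ j then F i j else 0 := by
        refine sum_congr rfl fun i _ => sum_congr rfl fun j _ => ?_
        rcases eq_or_ne i j with rfl | h <;> simp [*]
    _ = ∑ i, ∑ j, if i < j then 2 * F i j else 0 := by
        simp only [sum_sum_ne_eq_sum_sum_lt, hF, two_mul]
    _ = ∑ ij : Fin m × Fin m with ij.1 < ij.2, 2 * F ij.1 ij.2 := by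
        rw [sum_filter, Fintype.sum_prod_type]
    _ = 2 * ∑ ij : Pairs m, F ij.1.1 ij.1.2 := by
        rw [← mul_sum, ← sum_subtype_eq_sum_filter, subtype_univ]

lemma IsSkew.ext_of_lt {s t : Fin m → Fin m → ℝ} (hs : IsSkew s) (ht : IsSkew t)
    (h : ∀ i j, i < j → s i j = t i j) : s = t := by
  funext i j
  rcases lt_trichotomy i j with hij | rfl | hij
  · exact h i j hij
  · rw [hs.apply_self, ht.apply_self]
  · rw [hs j i, ht j i, h j i hij]

/-- The skew kernel with prescribed entries above the diagonal. It extends the coordinates indexed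
by `Pairs m` to all ordered pairs of components, so that components can be relabelled. -/
def skewExt (u : Pairs m → ℝ) (i j : Fin m) : ℝ :=
  if h : i < j then u ⟨(i, j), h⟩ else if h : j < i then -u ⟨(j, i), h⟩ else 0

lemma skewExt_pair (u : Pairs m → ℝ) (ij : Pairs m) : skewExt u ij.1.1 ij.1.2 = u ij :=
  dif_pos ij.2

lemma skewExt_of_lt (u : Pairs m → ℝ) {i j : Fin m} (h : i < j) : skewExt u i j = u ⟨(i, j), h⟩ :=
  dif_pos h

lemma skewExt_isSkew (u : Pairs m → ℝ) : IsSkew (skewExt u) := by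
  intro i j
  rcases lt_trichotomy i j with h | rfl | h <;> simp [skewExt, *, not_lt_of_gt]

lemma skewExt_ne_zero {u : Pairs m → ℝ} (hu : u ≠ 0) : skewExt u ≠ 0 := by
  rintro h
  refine hu (funext fun ij => ?_)
  rw [← skewExt_pair u, h]
  rfl

lemma skewExt_z (c : ℕ → ℝ) (a : Equiv.Perm (Fin m)) (i j : Fin m) :
    skewExt (z c a) i j = precedenceKernel c (a.symm i) (a.symm j) := by
  refine congrFun₂ (IsSkew.ext_of_lt (t := fun i j => precedenceKernel c (a.symm i) (a.symm j))
    (skewExt_isSkew _) (fun _ _ => precedenceKernel_isSkew c _ _) fun i j hij => ?_) i j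
  rw [skewExt_of_lt _ hij, z_eq_precedenceKernel]

/-- The action on regression vectors of relabelling the components of all treatments by `g`. -/
def relabel (g : Equiv.Perm (Fin m)) : (Unit ⊕ Pairs m → ℝ) →ₗ[ℝ] (Unit ⊕ Pairs m → ℝ) where
  toFun v := Sum.elim (v ∘ Sum.inl) fun ij =>
    skewExt (v ∘ Sum.inr) (g.symm ij.1.1) (g.symm ij.1.2)
  map_add' u v := by
    ext (_ | ij)
    · rfl
    · simp only [skewExt, Sum.elim_inr, Pi.add_apply, Function.comp_apply]
      split_ifs <;> ring
  map_smul' r v := by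
    ext (_ | ij)
    · rfl
    · simp only [skewExt, Sum.elim_inr, Pi.smul_apply, Function.comp_apply, smul_eq_mul,
        RingHom.id_apply]
      split_ifs <;> ring

lemma relabel_x (c : ℕ → ℝ) (g a : Equiv.Perm (Fin m)) : relabel g (x c a) = x c (g * a) := by
  ext (_ | ij)
  · rfl
  · exact (skewExt_z c a _ _).trans (z_eq_precedenceKernel c (g * a) ij).symm

lemma dotProduct_x (c : ℕ → ℝ) (v : Unit ⊕ Pairs m → ℝ) (a : Equiv.Perm (Fin m)) :
    v ⬝ᵥ x c a = v (Sum.inl ()) + (∑ i, ∑ j, skewExt (v ∘ Sum.inr) i j *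
      precedenceKernel c (a⁻¹ i) (a⁻¹ j)) / 2 := by
  have hpairs : ∑ i, ∑ j, skewExt (v ∘ Sum.inr) i j * precedenceKernel c (a⁻¹ i) (a⁻¹ j) =
      2 * ∑ ij : Pairs m, v (Sum.inr ij) * z c a ij := by
    rw [sum_sum_eq_two_mul_sum_pairs]
    · simp only [skewExt_pair, z_eq_precedenceKernel, Function.comp_apply, Equiv.Perm.inv_def]
    · intro i j
      rw [skewExt_isSkew _ i j, precedenceKernel_isSkew c (a⁻¹ i), neg_mul_neg]
    · intro i
      rw [(skewExt_isSkew _).apply_self, zero_mul]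
  rw [hpairs, mul_div_cancel_left₀ _ two_ne_zero]
  simp [dotProduct, x]

lemma dotProduct_M0_mulVec (c : ℕ → ℝ) (v : Unit ⊕ Pairs m → ℝ) :
    v ⬝ᵥ M0 m c *ᵥ v = v (Sum.inl ()) ^ 2 + (𝔼 b : Equiv.Perm (Fin m),
      (∑ i, ∑ j, skewExt (v ∘ Sum.inr) i j * precedenceKernel c (b i) (b j)) ^ 2) / 4 := by
  set t := v (Sum.inl ())
  set Q : Equiv.Perm (Fin m) → ℝ := fun b =>
    ∑ i, ∑ j, skewExt (v ∘ Sum.inr) i j * precedenceKernel c (b i) (b j)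
  have hQ_mean : 𝔼 b, Q b = 0 := (precedenceKernel_isSkew c).expect_sum_perm_apply _
  calc v ⬝ᵥ M0 m c *ᵥ v = ∑ a, 1 / (m.factorial : ℝ) * (v ⬝ᵥ x c a) ^ 2 :=
        dotProduct_infoMatrix_mulVec (x c) _ v
    _ = 𝔼 a, (v ⬝ᵥ x c a) ^ 2 := by
        rw [← mul_sum, Fintype.expect_eq_sum_div_card, Fintype.card_perm, Fintype.card_fin]
        ring
    _ = 𝔼 b, (t + Q b / 2) ^ 2 :=
        Fintype.expect_equiv (Equiv.inv _) _ _ fun a => by rw [dotProduct_x]; rfl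
    _ = 𝔼 b, (t ^ 2 + t * Q b + Q b ^ 2 / 4) := expect_congr rfl fun b _ => by ring
    _ = t ^ 2 + (𝔼 b, Q b ^ 2) / 4 := by
        rw [expect_add_distrib, expect_add_distrib, ← mul_expect, hQ_mean, ← expect_div,
          Fintype.expect_const, mul_zero, add_zero]

theorem M0_posDef {c : ℕ → ℝ} (hpos₁ : 0 < b0 m c - 2 * b1 m c)
    (hpos₂ : 0 < b0 m c + ((m : ℝ) - 2) * b1 m c) : (M0 m c).PosDef := by
  have hpsd : (M0 m c).PosSemidef := posSemidef_infoMatrix fun _ => by positivity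
  refine .of_dotProduct_mulVec_pos hpsd.1 fun v hv => ?_
  rw [star_trivial, dotProduct_M0_mulVec]
  rcases eq_or_ne (v ∘ Sum.inr) 0 with hinr | hinr
  · have hinl : v (Sum.inl ()) ≠ 0 := by
      contrapose! hv
      exact funext (Sum.rec (fun _ => hv) (congrFun hinr))
    positivity
  · have hpos := (precedenceKernel_isSkew c).expect_sq_sum_perm_apply_pos
      (fun _ _ => permMoment_precedenceKernel_eq_b0 c)
      (fun _ _ _ => permMoment_precedenceKernel_eq_b1 c) (skewExt_isSkew _) (skewExt_ne_zero hinr)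
      hpos₁ (by rwa [Fintype.card_fin])
    positivity

end MomentMatrix

theorem statement14_general {m : ℕ} (c : ℕ → ℝ) (hpos1 : 0 < b0 m c - 2 * b1 m c)
    (hpos2 : 0 < b0 m c + ((m : ℝ) - 2) * b1 m c)
    (w : Equiv.Perm (Fin m) → ℝ) (hw0 : ∀ a, 0 ≤ w a)
    (hw1 : ∑ a : Equiv.Perm (Fin m), w a = 1) :
    (momentMatrix c w).det ≤ (M0 m c).det ∧
      ((momentMatrix c w).det = (M0 m c).det → momentMatrix c w = M0 m c) :=
  det_infoMatrix_le_of_isPretransitive (G := Equiv.Perm (Fin m)) (f := x c)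
    (P := fun g => LinearMap.toMatrix' (relabel g))
    (fun g a => (LinearMap.toMatrix'_mulVec _ _).trans (relabel_x c g a)) (fun _ _ => rfl)
    (by simp [Fintype.card_perm, Nat.factorial_ne_zero]) (M0_posDef hpos1 hpos2) hw0 hw1

/-- Implication (iii) of Theorem 1 for the D-criterion: if `b₀ − 2b₁ > 0` and
`b₀ + (m−2)b₁ > 0`, then for every design measure `w`, `det M(w) ≤ det M₀`, and
equality of determinants forces `M(w) = M₀`. -/
theorem statement14 {m : ℕ} (hm : 3 ≤ m) (c : ℕ → ℝ) (hc1 : c 1 = 1)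
    (hmono : ∀ h : ℕ, 1 ≤ h → h + 1 ≤ m - 1 → c (h + 1) ≤ c h)
    (hlast : 0 ≤ c (m - 1))
    (hpos1 : 0 < b0 m c - 2 * b1 m c)
    (hpos2 : 0 < b0 m c + ((m : ℝ) - 2) * b1 m c)
    (w : Equiv.Perm (Fin m) → ℝ) (hw0 : ∀ a, 0 ≤ w a)
    (hw1 : ∑ a : Equiv.Perm (Fin m), w a = 1) :
    (momentMatrix c w).det ≤ (M0 m c).det ∧
      ((momentMatrix c w).det = (M0 m c).det → momentMatrix c w = M0 m c) :=
  statement14_general c hpos1 hpos2 w hw0 hw1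
end OofA
end
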